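/- arXiv:1911.09473 — 2 statements merged into one kernel-verified Lean document; each statement's English description precedes it below -/
import Mathlib

section
/- For all integers m ≥ 2 and n ≥ 1 and every world w of the frame G_m: w satisfies condition B_n if and only if w = w_1 and n = m. -/
/-- `pathRel R k w v` : there is an `R`-path of length exactly `k` from `w` to `v`. -/
def pathRel {W : Type*} (R : W → W → Prop) : ℕ → W → W → Prop
  | 0 => fun w v => w = v
  | k + 1 => fun w v => ∃ u, R w u ∧ pathRel R k u v

/-- A world is a dead end if it sees no world. -/
def DeadEnd {W : Type*} (R : W → W → Prop) (v : W) : Prop := ∀ u, ¬ R v u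

/-- Condition `B_n` at a world `w`: `w` has a dead-end successor; `w` sees in exactly `n`
steps a world having a dead-end successor; and for no `k` with `2 ≤ k ≤ n - 1` does `w` see
in exactly `k` steps a world having a dead-end successor. -/
def CondB {W : Type*} (R : W → W → Prop) (n : ℕ) (w : W) : Prop :=
  (∃ v, R w v ∧ DeadEnd R v) ∧
  (∃ v, pathRel R n w v ∧ ∃ u, R v u ∧ DeadEnd R u) ∧
  (∀ k, 2 ≤ k → k ≤ n - 1 → ¬ ∃ v, pathRel R k w v ∧ ∃ u, R v u ∧ DeadEnd R u)

/-- The accessibility relation of the frame `G_m`: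
worlds are `w_1, …, w_m` (encoded as `Sum.inl i` for `i : Fin m`, `w_{i+1} = Sum.inl i`)
together with `w*` (encoded as `Sum.inr ()`); `w_i R w_{i+1}` for `1 ≤ i < m`,
`w_m R w_1`, and `w_1 R w*`. -/
def Grel (m : ℕ) : (Fin m ⊕ Unit) → (Fin m ⊕ Unit) → Prop
  | Sum.inl i, Sum.inl j => (j : ℕ) = (i : ℕ) + 1 ∨ ((i : ℕ) = m - 1 ∧ (j : ℕ) = 0)
  | Sum.inl i, Sum.inr _ => (i : ℕ) = 0
  | Sum.inr _, _ => False

theorem pathRel_inr_iff (m k : ℕ) (j : Fin m) (x : Unit) :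
    ¬ pathRel (Grel m) k (Sum.inr x) (Sum.inl j) := by
  cases k with
  | zero => simp [pathRel]
  | succ k => rintro ⟨u, hu, -⟩; exact hu

theorem Grel_inl_iff (m : ℕ) (i j : Fin m) :
    Grel m (Sum.inl i) (Sum.inl j) ↔ (j : ℕ) = ((i : ℕ) + 1) % m := by
  have hi := i.2
  have hj := j.2
  change ((j : ℕ) = (i : ℕ) + 1 ∨ ((i : ℕ) = m - 1 ∧ (j : ℕ) = 0)) ↔ _
  rcases Nat.lt_or_ge ((i : ℕ) + 1) m with h | h
  · rw [Nat.mod_eq_of_lt h]; omega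
  · have : (i : ℕ) + 1 = m := by omega
    rw [this, Nat.mod_self]; omega

theorem pathRel_inl_iff (m k : ℕ) (i j : Fin m) :
    pathRel (Grel m) k (Sum.inl i) (Sum.inl j) ↔ (j : ℕ) = ((i : ℕ) + k) % m := by
  induction k generalizing i with
  | zero =>
    simp only [pathRel, Sum.inl.injEq, Nat.add_zero, Nat.mod_eq_of_lt i.2, Fin.ext_iff]
    exact eq_comm
  | succ k ih =>
    have key : ((i : ℕ) + 1) % m + k ≡ (i : ℕ) + (k + 1) [MOD m] := by
      have := (Nat.mod_modEq ((i : ℕ) + 1) m).add_right k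
      rwa [show (i : ℕ) + 1 + k = i + (k + 1) by omega] at this
    constructor
    · rintro ⟨u | u, hu, hp⟩
      · rw [Grel_inl_iff] at hu
        rw [ih, hu] at hp
        exact hp.trans key
      · exact absurd hp (pathRel_inr_iff m k j u)
    · intro h
      refine ⟨Sum.inl ⟨((i : ℕ) + 1) % m, Nat.mod_lt _ (by have := i.2; omega)⟩, ?_, ?_⟩
      · rw [Grel_inl_iff]
      · rw [ih]; exact h.trans key.symm

theorem hasDead_iff (m : ℕ) (hm : 2 ≤ m) (v : Fin m ⊕ Unit) :
    (∃ u, Grel m v u ∧ DeadEnd (Grel m) u) ↔ v = Sum.inl (⟨0, by omega⟩ : Fin m) := by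
  constructor
  · rintro ⟨u | u, hu, hd⟩
    · refine absurd ?_ (hd (Sum.inl ⟨((u : ℕ) + 1) % m, Nat.mod_lt _ (by omega)⟩))
      rw [Grel_inl_iff]
    · rcases v with v | v
      · exact congrArg Sum.inl (Fin.ext hu)
      · exact hu.elim
  · rintro rfl
    exact ⟨Sum.inr (), rfl, fun u h => h⟩

theorem stmt7 (m n : ℕ) (hm : 2 ≤ m) (hn : 1 ≤ n) (w : Fin m ⊕ Unit) :
    CondB (Grel m) n w ↔ (w = Sum.inl (⟨0, by omega⟩ : Fin m) ∧ n = m) := by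
  have hz : ∀ k, (∃ v, pathRel (Grel m) k (Sum.inl (⟨0, by omega⟩ : Fin m)) v ∧
      ∃ u, Grel m v u ∧ DeadEnd (Grel m) u) ↔ k % m = 0 := by
    intro k
    simp only [hasDead_iff m hm, exists_eq_right, pathRel_inl_iff, Nat.zero_add]
    exact eq_comm
  unfold CondB
  rw [hasDead_iff m hm]
  apply and_congr_right
  rintro rfl
  simp only [hz]
  constructor
  · rintro ⟨h1, h2⟩
    have hle : m ≤ n := Nat.le_of_dvd hn (Nat.dvd_of_mod_eq_zero h1)
    by_contra hne
    exact h2 m hm (by omega) (Nat.mod_self m)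
  · rintro rfl
    refine ⟨Nat.mod_self n, fun k hk hk' h => ?_⟩
    rw [Nat.mod_eq_of_lt (by omega)] at h
    omega
end

section
/- For every integer d ≥ 1, every even integer n ≥ 2, and every world w of the frame G_n, there exist an even integer m with 2 ≤ m ≤ d + 3 and a world w' of the frame G_m such that the subframe of G_n induced on the set of worlds reachable from w in at most d R-steps is isomorphic to the subframe of G_m induced on the set of worlds reachable from w' in at most d R-steps, via an isomorphism sending w to w'. (The induced subframe on a set X of worlds has universe X and all R-pairs between elements of X; an isomorphism is a bijection preserving the relation in both directions.) -/
/-- `Reach R d w v` : `v` is reachable from `w` in at most `d` `R`-steps. -/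
def Reach {W : Type*} (R : W → W → Prop) (d : ℕ) (w v : W) : Prop :=
  ∃ k, k ≤ d ∧ pathRel R k w v

theorem mod_two {x n : ℕ} (h : x < 2 * n) : x % n = if x < n then x else x - n := by
  split_ifs with h1
  · exact Nat.mod_eq_of_lt h1
  · rw [Nat.mod_eq_sub_mod (by omega), Nat.mod_eq_of_lt (by omega)]

theorem grel_ll {n : ℕ} (i j : Fin n) :
    Grel n (Sum.inl i) (Sum.inl j) ↔ (j : ℕ) = (i + 1) % n := by
  have hi := i.2
  have hj := j.2
  rw [mod_two (by omega)]
  simp only [Grel]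
  split_ifs <;> omega

theorem path_inr {n : ℕ} (k : ℕ) (v : Fin n ⊕ Unit) :
    pathRel (Grel n) k (Sum.inr ()) v ↔ k = 0 ∧ v = Sum.inr () := by
  cases k with
  | zero => simp [pathRel, eq_comm]
  | succ k => simp [pathRel, Grel]

theorem path_ll {n : ℕ} (k : ℕ) (i j : Fin n) :
    pathRel (Grel n) k (Sum.inl i) (Sum.inl j) ↔ (j : ℕ) = (i + k) % n := by
  induction k generalizing i with
  | zero =>
    simp only [pathRel, Sum.inl.injEq, Fin.ext_iff, Nat.add_zero, Nat.mod_eq_of_lt i.2]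
    exact eq_comm
  | succ k ih =>
    have hn : 0 < n := i.pos
    simp only [pathRel]
    constructor
    · rintro ⟨u | u, h1, h2⟩
      · rw [grel_ll] at h1
        rw [ih] at h2
        rw [h2, h1, Nat.mod_add_mod]
        congr 1; omega
      · exact absurd ((path_inr _ _).1 h2).2 (by simp)
    · intro h
      refine ⟨Sum.inl ⟨(i + 1) % n, Nat.mod_lt _ hn⟩, (grel_ll _ _).2 rfl, ?_⟩
      rw [ih, h]
      simp only [Nat.mod_add_mod]
      congr 1; omega

theorem path_lr {n : ℕ} (k : ℕ) (i : Fin n) (u : Unit) :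
    pathRel (Grel n) k (Sum.inl i) (Sum.inr u) ↔ ∃ k', k = k' + 1 ∧ (i + k') % n = 0 := by
  induction k generalizing i with
  | zero => simp [pathRel]
  | succ k ih =>
    have hn : 0 < n := i.pos
    simp only [pathRel]
    constructor
    · rintro ⟨v | v, h1, h2⟩
      · rw [grel_ll] at h1
        obtain ⟨k', rfl, h3⟩ := (ih _).1 h2
        refine ⟨k' + 1, rfl, ?_⟩
        rw [h1, Nat.mod_add_mod] at h3
        rw [← h3]; congr 1; omega
      · obtain ⟨rfl, -⟩ := (path_inr _ _).1 h2
        refine ⟨0, rfl, ?_⟩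
        simp only [Grel] at h1
        simp [h1]
    · rintro ⟨k', h, h3⟩
      obtain rfl : k = k' := by omega
      cases k with
      | zero =>
        refine ⟨Sum.inr u, ?_, rfl⟩
        rw [Nat.add_zero, Nat.mod_eq_of_lt i.2] at h3
        exact h3
      | succ k =>
        refine ⟨Sum.inl ⟨(i + 1) % n, Nat.mod_lt _ hn⟩, (grel_ll _ _).2 rfl, ?_⟩
        rw [ih]
        refine ⟨k, rfl, ?_⟩
        simp only [Nat.mod_add_mod]
        rw [← h3]; congr 1; omega

/-- The common shape of the reachable part: a chain `0, …, d` and `w*` if `T < d`. -/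
abbrev Mdl (d T : ℕ) : Type := {x : Fin (d + 1) ⊕ Unit // x.isRight = true → T < d}

/-- The relation on the model. -/
def MRel (d T : ℕ) : (Fin (d + 1) ⊕ Unit) → (Fin (d + 1) ⊕ Unit) → Prop
  | Sum.inl a, Sum.inl b => (b : ℕ) = a + 1
  | Sum.inl a, Sum.inr _ => (a : ℕ) = T
  | Sum.inr _, _ => False

/-- The embedding of the model. -/
def emb (d n : ℕ) (i : Fin n) : (Fin (d + 1) ⊕ Unit) → Fin n ⊕ Unit
  | Sum.inl a => Sum.inl ⟨(i + a) % n, Nat.mod_lt _ i.pos⟩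
  | Sum.inr u => Sum.inr u

theorem model_equiv (d n T : ℕ) (hn : d + 2 ≤ n) (i : Fin n)
    (hT : ∀ a ≤ d, (i + a) % n = 0 ↔ a = T) :
    ∃ e : Mdl d T ≃ {v : Fin n ⊕ Unit // Reach (Grel n) d (Sum.inl i) v},
      (e ⟨Sum.inl 0, by simp⟩).1 = Sum.inl i ∧
      ∀ a b, MRel d T a.1 b.1 ↔ Grel n (e a).1 (e b).1 := by
  have hi := i.2
  have hr : ∀ x : Mdl d T, Reach (Grel n) d (Sum.inl i) (emb d n i x.1) := by
    rintro ⟨a | u, hx⟩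
    · exact ⟨a, by have := a.2; omega, (path_ll _ _ _).2 rfl⟩
    · have hx' : T < d := hx rfl
      exact ⟨T + 1, hx', (path_lr _ _ _).2 ⟨T, rfl, (hT T hx'.le).2 rfl⟩⟩
  refine ⟨Equiv.ofBijective (fun x => ⟨emb d n i x.1, hr x⟩) ⟨?_, ?_⟩, ?_, ?_⟩
  · rintro ⟨a | u, hx⟩ ⟨b | v, hy⟩ h
    · have h' := congrArg Subtype.val h
      simp only [emb, Sum.inl.injEq, Fin.mk.injEq] at h'
      have ha := a.2
      have hb := b.2
      rw [mod_two (by omega), mod_two (by omega)] at h'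
      have : a = b := by
        apply Fin.ext
        split_ifs at h' <;> omega
      subst this; rfl
    · have h' := congrArg Subtype.val h
      simp [emb] at h'
    · have h' := congrArg Subtype.val h
      simp [emb] at h'
    · rfl
  · rintro ⟨j | u, k, hk, hp⟩
    · rw [path_ll] at hp
      refine ⟨⟨Sum.inl ⟨k, by omega⟩, by simp⟩, ?_⟩
      apply Subtype.ext
      simp only [emb, Sum.inl.injEq]
      exact Fin.ext hp.symm
    · obtain ⟨k', rfl, h⟩ := (path_lr _ _ _).1 hp
      have := (hT k' (by omega)).1 h
      exact ⟨⟨Sum.inr u, fun _ => by omega⟩, rfl⟩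
  · change emb d n i (Sum.inl 0) = Sum.inl i
    simp only [emb, Sum.inl.injEq]
    apply Fin.ext
    simp [Nat.mod_eq_of_lt hi]
  · rintro ⟨a | u, hx⟩ ⟨b | v, hy⟩
    · change (b : ℕ) = a + 1 ↔ Grel n (emb d n i (Sum.inl a)) (emb d n i (Sum.inl b))
      simp only [emb]
      rw [grel_ll]
      have ha := a.2
      have hb := b.2
      simp only [Nat.mod_add_mod]
      rw [mod_two (by omega), mod_two (by omega)]
      split_ifs <;> omega
    · exact (hT a (by have := a.2; omega)).symm
    · simp [emb, MRel, Grel]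
    · simp [emb, MRel, Grel]

theorem stmt15 (d : ℕ) (hd : 1 ≤ d) (n : ℕ) (hn : 2 ≤ n) (hneven : Even n)
    (w : Fin n ⊕ Unit) :
    ∃ m : ℕ, 2 ≤ m ∧ m ≤ d + 3 ∧ Even m ∧
      ∃ w' : Fin m ⊕ Unit,
        -- an isomorphism between the subframes induced on the worlds reachable
        -- in at most `d` steps from `w` (in `G_n`) and from `w'` (in `G_m`)
        ∃ e : {v : Fin n ⊕ Unit // Reach (Grel n) d w v} ≃
              {v : Fin m ⊕ Unit // Reach (Grel m) d w' v},
          (e ⟨w, ⟨0, Nat.zero_le d, rfl⟩⟩).1 = w' ∧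
          ∀ a b : {v : Fin n ⊕ Unit // Reach (Grel n) d w v},
            Grel n a.1 b.1 ↔ Grel m (e a).1 (e b).1 := by
  by_cases hle : n ≤ d + 3
  · exact ⟨n, hn, hle, hneven, w, Equiv.refl _, rfl, fun _ _ => Iff.rfl⟩
  obtain ⟨m, hm1, hm2, hm⟩ : ∃ m, d + 2 ≤ m ∧ m ≤ d + 3 ∧ Even m := by
    rcases Nat.even_or_odd d with h | h
    · exact ⟨d + 2, le_rfl, by omega, by grind⟩
    · exact ⟨d + 3, by omega, le_rfl, by grind⟩
  refine ⟨m, by omega, hm2, hm, ?_⟩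
  rcases w with i | u
  · have hi := i.2
    obtain ⟨T, i', h1, h2⟩ : ∃ (T : ℕ) (i' : Fin m),
        (∀ a ≤ d, (i + a) % n = 0 ↔ a = T) ∧ (∀ a ≤ d, (i' + a) % m = 0 ↔ a = T) := by
      by_cases h0 : (i : ℕ) = 0
      · refine ⟨0, ⟨0, by omega⟩, ?_, ?_⟩ <;> intro a ha
        · rw [mod_two (by omega)]; split_ifs <;> omega
        · dsimp only
          rw [mod_two (by omega)]; split_ifs <;> omega
      · refine ⟨min (n - i) (d + 1), ⟨m - min (n - i) (d + 1), by omega⟩, ?_, ?_⟩ <;> intro a ha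
        · rw [mod_two (by omega)]; split_ifs <;> omega
        · dsimp only
          rw [mod_two (by omega)]; split_ifs <;> omega
    obtain ⟨e, he, hr⟩ := model_equiv d n T (by omega) i h1
    obtain ⟨e', he', hr'⟩ := model_equiv d m T hm1 i' h2
    refine ⟨Sum.inl i', e.symm.trans e', ?_, ?_⟩
    · refine Eq.trans ?_ he'
      have h3 : e.symm ⟨Sum.inl i, ⟨0, Nat.zero_le d, rfl⟩⟩ = ⟨Sum.inl 0, by simp⟩ :=
        (Equiv.symm_apply_eq e).2 (Subtype.ext he.symm)
      exact congrArg (fun x => (e' x).1) h3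
    · intro a b
      rw [Equiv.trans_apply, Equiv.trans_apply, ← hr', hr]
      simp
  · have key : ∀ (k : ℕ) (v : Fin k ⊕ Unit), Reach (Grel k) d (Sum.inr ()) v → v = Sum.inr () := by
      rintro k v ⟨l, -, h⟩
      exact ((path_inr _ _).1 h).2
    refine ⟨Sum.inr (), ⟨fun _ => ⟨Sum.inr (), 0, Nat.zero_le d, rfl⟩,
      fun _ => ⟨Sum.inr (), 0, Nat.zero_le d, rfl⟩, ?_, ?_⟩, rfl, ?_⟩
    · rintro ⟨v, hv⟩
      exact Subtype.ext (key _ _ hv).symm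
    · rintro ⟨v, hv⟩
      exact Subtype.ext (key _ _ hv).symm
    · rintro ⟨a, ha⟩ ⟨b, hb⟩
      obtain rfl := key _ _ ha
      simp [Grel]
end
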